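/- Chaitin's theorem on Ω: For a universal prefix-free machine U, the halting probability Ω_U is a left-c.e. real, the binary expansion of Ω_U is a Martin-Löf random sequence, and Ω_U is Turing equivalent to the halting problem ∅'. -/

import Mathlib

open scoped ENNReal NNReal Classical

namespace AR

/-- Elements of Cantor space `2^ω`: infinite binary sequences. -/
abbrev Seq := ℕ → Bool

/-- Finite binary strings `2^{<ω}`. -/
abbrev Str := List Bool

/-- The first `n` bits of a sequence `A`, as a finite string (`A↾n`). -/
def pre (A : Seq) (n : ℕ) : Str := List.ofFn fun i : Fin n => A i

/-- The basic clopen cylinder `[σ]` of all sequences extending `σ`. -/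
def cyl (σ : Str) : Set Seq := {A | pre A σ.length = σ}

/-- A measure on Cantor space is *fair-coin* if every cylinder `[σ]` has measure
`2^{-|σ|}`; this uniquely characterizes the usual product measure `μ` on `2^ω`. -/
def FairCoin (μ : MeasureTheory.Measure Seq) : Prop :=
  ∀ σ : Str, μ (cyl σ) = (2 : ℝ≥0∞)⁻¹ ^ σ.length

/-- A machine is a partial computable function `2^{<ω} ⇀ 2^{<ω}`. -/
def IsMachine (M : Str →. Str) : Prop := Partrec M

/-- Kolmogorov complexity of `τ` relative to the machine `M`:
`C_M(τ) = min{|σ| : M(σ)↓ = τ}`, with value `∞` if no such `σ` exists. -/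
noncomputable def Cplx (M : Str →. Str) (τ : Str) : ℕ∞ :=
  sInf ((fun σ : Str => (σ.length : ℕ∞)) '' {σ | τ ∈ M σ})

/-- A universal machine: a machine simulating every machine up to an additive
constant.  `Cplx U` for universal `U` is plain Kolmogorov complexity `C`. -/
def UniversalMachine (U : Str →. Str) : Prop :=
  IsMachine U ∧ ∀ M : Str →. Str, IsMachine M → ∃ c : ℕ, ∀ τ, Cplx U τ ≤ Cplx M τ + c

/-- A set of strings is prefix-free if none of its elements is a proper initial
segment of another. -/
def PrefixFree (S : Set Str) : Prop :=
  ∀ σ ∈ S, ∀ τ ∈ S, σ <+: τ → σ = τ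

/-- A prefix-free machine: a machine whose domain is prefix-free. -/
def PrefixFreeMachine (M : Str →. Str) : Prop :=
  IsMachine M ∧ PrefixFree {σ | (M σ).Dom}

/-- A universal prefix-free machine.  `Cplx U` for such `U` is prefix-free
Kolmogorov complexity `K`. -/
def UniversalPFMachine (U : Str →. Str) : Prop :=
  PrefixFreeMachine U ∧
    ∀ M : Str →. Str, PrefixFreeMachine M → ∃ c : ℕ, ∀ τ, Cplx U τ ≤ Cplx M τ + c

/-- A c.e. (recursively enumerable) predicate. -/
def CEPred {α} [Primcodable α] (p : α → Prop) : Prop :=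
  Partrec fun a => Part.assert (p a) fun _ => Part.some ()

/-- A Martin-Löf test: a sequence of uniformly Σ⁰₁ classes `U i`, given by a single
c.e. set `W` of pairs, with `μ (U i) ≤ 2^{-i}`. -/
def MLTest (μ : MeasureTheory.Measure Seq) (U : ℕ → Set Seq) : Prop :=
  ∃ W : Set (ℕ × Str), CEPred (· ∈ W) ∧
    (∀ i, U i = ⋃ σ ∈ {σ : Str | (i, σ) ∈ W}, cyl σ) ∧
    ∀ i, μ (U i) ≤ (2 : ℝ≥0∞)⁻¹ ^ i

/-- `A` is Martin-Löf random if it passes every Martin-Löf test. -/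
def MLRandom (μ : MeasureTheory.Measure Seq) (A : Seq) : Prop :=
  ∀ U : ℕ → Set Seq, MLTest μ U → A ∉ ⋂ i, U i

/-- Oracle partial recursion: `RecIn O f` means that the partial function
`f : ℕ ⇀ ℕ` is partial recursive relative to the oracle `O`
(Mathlib's `Nat.RecursiveIn`). -/
inductive RecIn (O : ℕ →. ℕ) : (ℕ →. ℕ) → Prop
  | zero : RecIn O (pure 0)
  | succ : RecIn O Nat.succ
  | left : RecIn O ↑fun n : ℕ => n.unpair.1
  | right : RecIn O ↑fun n : ℕ => n.unpair.2
  | oracle : RecIn O O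
  | pair {f g} : RecIn O f → RecIn O g → RecIn O fun n => Nat.pair <$> f n <*> g n
  | comp {f g} : RecIn O f → RecIn O g → RecIn O fun n => g n >>= f
  | prec {f g} : RecIn O f → RecIn O g → RecIn O (Nat.unpaired fun a n =>
      n.rec (f a) fun y IH => do let i ← IH; g (Nat.pair a (Nat.pair y i)))
  | rfind {f} : RecIn O f →
      RecIn O fun a => Nat.rfind fun n => (fun m => m = 0) <$> f (Nat.pair a n)

/-- The characteristic-function oracle associated to a sequence `A ∈ 2^ω`. -/
def oracleOf (A : Seq) : ℕ →. ℕ := fun n => Part.some (cond (A n) 1 0)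

/-- The characteristic-function oracle associated to a set of naturals. -/
noncomputable def oracleOfSet (S : Set ℕ) : ℕ →. ℕ :=
  fun n => Part.some (if n ∈ S then 1 else 0)

/-- Relative partial computability for partial functions between coded types. -/
def PartrecIn (O : ℕ →. ℕ) {α σ} [Primcodable α] [Primcodable σ] (f : α →. σ) : Prop :=
  RecIn O fun n =>
    Part.bind (Encodable.decode (α := α) n) fun a => (f a).map Encodable.encode

/-- A predicate is c.e. relative to the oracle `O`. -/
def CEPredIn (O : ℕ →. ℕ) {α} [Primcodable α] (p : α → Prop) : Prop :=
  PartrecIn O fun a => Part.assert (p a) fun _ => Part.some ()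

/-- Turing reducibility between oracles: `f` is recursive in `g`. -/
def TuringLE (f g : ℕ →. ℕ) : Prop := RecIn g f

/-- Turing reducibility `B ≤_T A` between sequences. -/
def SeqTuringLE (B A : Seq) : Prop := TuringLE (oracleOf B) (oracleOf A)

/-- The `e`-th partial computable function `φ_e`, via Mathlib's standard
enumeration of codes for the partial recursive functions. -/
def phi (e : ℕ) : ℕ →. ℕ := (Denumerable.ofNat Nat.Partrec.Code e).eval

/-- The halting problem `∅' = {e : φ_e(e)↓}`. -/
def haltingSet : Set ℕ := {e | (phi e e).Dom}

/-- A Martin-Löf test relative to the oracle `O`. -/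
def MLTestIn (O : ℕ →. ℕ) (μ : MeasureTheory.Measure Seq) (U : ℕ → Set Seq) : Prop :=
  ∃ W : Set (ℕ × Str), CEPredIn O (· ∈ W) ∧
    (∀ i, U i = ⋃ σ ∈ {σ : Str | (i, σ) ∈ W}, cyl σ) ∧
    ∀ i, μ (U i) ≤ (2 : ℝ≥0∞)⁻¹ ^ i

/-- Martin-Löf randomness relative to the oracle `O`. -/
def MLRandomIn (O : ℕ →. ℕ) (μ : MeasureTheory.Measure Seq) (A : Seq) : Prop :=
  ∀ U : ℕ → Set Seq, MLTestIn O μ U → A ∉ ⋂ i, U i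

/-- The halting probability `Ω_U = Σ_{σ ∈ dom U} 2^{-|σ|}` of a machine `U`. -/
noncomputable def Omega (U : Str →. Str) : ℝ :=
  ∑' σ : Str, if (U σ).Dom then (2 : ℝ)⁻¹ ^ σ.length else 0

/-- The real number `0.A` in `[0,1]` whose binary expansion is `A ∈ 2^ω`. -/
noncomputable def binExp (A : Seq) : ℝ :=
  ∑' n : ℕ, cond (A n) ((2 : ℝ)⁻¹ ^ (n + 1)) 0

/-- A real is left-c.e. if it is the limit of a computable strictly increasing
sequence of rationals. -/
def LeftCE (x : ℝ) : Prop :=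
  ∃ q : ℕ → ℚ, Computable q ∧ StrictMono q ∧
    Filter.Tendsto (fun n => (q n : ℝ)) Filter.atTop (nhds x)

section Computability

open Encodable

theorem primrec_pow : Primrec₂ ((· ^ ·) : ℕ → ℕ → ℕ) :=
  Primrec₂.unpaired'.1 Nat.Primrec.pow

theorem primrec_two_pow : Primrec fun n : ℕ => 2 ^ n :=
  primrec_pow.comp (Primrec.const 2) Primrec.id

theorem primrec_dvd : PrimrecRel ((· ∣ ·) : ℕ → ℕ → Prop) :=
  (Primrec.eq.comp (Primrec.nat_mod.comp Primrec.snd Primrec.fst) (Primrec.const 0)).of_eq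
    fun p => (Nat.dvd_iff_mod_eq_zero (m := p.1) (n := p.2)).symm

theorem primrec_gcd : Primrec₂ Nat.gcd := by
  have hp : PrimrecRel fun (p : ℕ × ℕ) (d : ℕ) => d ∣ p.1 ∧ d ∣ p.2 :=
    PrimrecPred.and (primrec_dvd.comp Primrec.snd (Primrec.fst.comp Primrec.fst))
      (primrec_dvd.comp Primrec.snd (Primrec.snd.comp Primrec.fst))
  refine (Primrec.nat_findGreatest
    (Primrec.nat_add.comp Primrec.fst Primrec.snd) hp).of_eq fun p => ?_
  rw [Nat.findGreatest_eq_iff]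
  refine ⟨?_, fun _ => ⟨Nat.gcd_dvd_left _ _, Nat.gcd_dvd_right _ _⟩, ?_⟩
  · rcases Nat.eq_zero_or_pos p.1 with h | h
    · simp [h]
    · exact (Nat.gcd_le_left _ h).trans (Nat.le_add_right _ _)
  · rintro n hn hle ⟨h1, h2⟩
    have hd := Nat.dvd_gcd h1 h2
    have : 0 < p.1 + p.2 := by omega
    have hg : 0 < Nat.gcd p.1 p.2 := by
      rcases Nat.eq_zero_or_pos (Nat.gcd p.1 p.2) with h | h
      · rw [Nat.gcd_eq_zero_iff] at h; omega
      · exact h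
    exact absurd (Nat.le_of_dvd hg hd) (by omega)

theorem primrec_sum_range {α : Type*} [Primcodable α] {f : α → ℕ → ℕ} {g : α → ℕ}
    (hf : Primrec₂ f) (hg : Primrec g) :
    Primrec fun a => ∑ i ∈ Finset.range (g a), f a i := by
  refine (Primrec.nat_rec' (h := fun a (p : ℕ × ℕ) => p.2 + f a p.1) hg (Primrec.const 0)
    (Primrec.nat_add.comp (Primrec.snd.comp Primrec.snd)
      (hf.comp Primrec.fst (Primrec.fst.comp Primrec.snd)))).of_eq fun a => ?_
  induction g a with
  | zero => rfl
  | succ n ih => rw [Finset.sum_range_succ, ← ih]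

theorem primrec_replicate {α : Type*} [Primcodable α] (x : α) :
    Primrec fun n : ℕ => List.replicate n x := by
  refine (Primrec.list_map Primrec.list_range (Primrec.const x).to₂).of_eq fun n => ?_
  simp

/-- The code of a rational number in the library's encoding of `ℚ` as a denumerable type. -/
theorem encode_rat_eq (q : ℚ) : @encode ℚ Primcodable.toEncodable q =
    ((List.range (Nat.pair (Equiv.intEquivNat q.num) q.den)).filter
      (fun y => y ∈ Set.range (@encode ℚ Rat.instEncodable))).length := by
  let := @decidableRangeEncode ℚ Rat.instEncodable
  rw [← List.countP_eq_length_filter]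
  trans ((List.range (@encode ℚ Rat.instEncodable q)).countP
      (fun y => @decide (y ∈ Set.range (@encode ℚ Rat.instEncodable)) (this y)))
  · rfl
  · refine List.countP_congr fun x _ => ?_
    simp

theorem natAbs_intEquivNat (z : ℤ) : z.natAbs = (Equiv.intEquivNat z + 1) / 2 := by
  cases z with
  | ofNat n =>
    change n = (2 * n + 1) / 2
    omega
  | negSucc n =>
    change n + 1 = (2 * n + 1 + 1) / 2
    omega

theorem mem_range_encode_rat (y : ℕ) : y ∈ Set.range (@encode ℚ Rat.instEncodable) ↔
    0 < y.unpair.2 ∧ Nat.gcd ((y.unpair.1 + 1) / 2) y.unpair.2 = 1 := by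
  constructor
  · rintro ⟨q, rfl⟩
    change 0 < (Nat.unpair (Nat.pair (Equiv.intEquivNat q.num) q.den)).2 ∧ Nat.gcd
      (((Nat.unpair (Nat.pair (Equiv.intEquivNat q.num) q.den)).1 + 1) / 2)
      (Nat.unpair (Nat.pair (Equiv.intEquivNat q.num) q.den)).2 = 1
    rw [Nat.unpair_pair, ← natAbs_intEquivNat]
    exact ⟨q.den_pos, q.reduced⟩
  · rintro ⟨h1, h2⟩
    refine ⟨⟨Equiv.intEquivNat.symm y.unpair.1, y.unpair.2, h1.ne', ?_⟩, ?_⟩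
    · rw [natAbs_intEquivNat, Equiv.apply_symm_apply]
      exact h2
    · change Nat.pair (Equiv.intEquivNat (Equiv.intEquivNat.symm y.unpair.1)) y.unpair.2 = y
      rw [Equiv.apply_symm_apply, Nat.pair_unpair]

theorem num_den_natCast_div (a b : ℕ) (hb : 0 < b) :
    ((a : ℚ) / b).num = ((a / Nat.gcd a b : ℕ) : ℤ) ∧ ((a : ℚ) / b).den = b / Nat.gcd a b := by
  have hg : 0 < Nat.gcd a b := Nat.gcd_pos_of_pos_right _ hb
  have hb' : 0 < ((b / Nat.gcd a b : ℕ) : ℤ) :=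
    Int.natCast_pos.2 (Nat.div_pos (Nat.gcd_le_right _ hb) hg)
  have hc : Nat.Coprime ((a / Nat.gcd a b : ℕ) : ℤ).natAbs ((b / Nat.gcd a b : ℕ) : ℤ).natAbs := by
    simpa using! Nat.coprime_div_gcd_div_gcd hg
  have heq : (a : ℚ) / b =
      (((a / Nat.gcd a b : ℕ) : ℤ) : ℚ) / (((b / Nat.gcd a b : ℕ) : ℤ) : ℚ) := by
    have hg' : (Nat.gcd a b : ℚ) ≠ 0 := by exact_mod_cast hg.ne'
    rw [Int.cast_natCast, Int.cast_natCast, Nat.cast_div (Nat.gcd_dvd_left _ _) hg',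
      Nat.cast_div (Nat.gcd_dvd_right _ _) hg', div_div_div_cancel_right₀ hg']
  rw [heq]
  refine ⟨Rat.num_div_eq_of_coprime hb' hc, ?_⟩
  exact_mod_cast Rat.den_div_eq_of_coprime hb' hc

theorem computable_natCast_div {a b : ℕ → ℕ} (ha : Primrec a) (hb : Primrec b)
    (hpos : ∀ n, 0 < b n) : Computable fun n => (a n : ℚ) / b n := by
  refine Computable.encode_iff.1 (Primrec.to_comp ?_)
  have hp : PrimrecPred fun y : ℕ => y ∈ Set.range (@encode ℚ Rat.instEncodable) := by
    refine PrimrecPred.of_eq ?_ fun y => (mem_range_encode_rat y).symm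
    have h1 : Primrec fun y : ℕ => y.unpair.1 := Primrec.fst.comp Primrec.unpair
    have h2 : Primrec fun y : ℕ => y.unpair.2 := Primrec.snd.comp Primrec.unpair
    exact (Primrec.nat_lt.comp (Primrec.const 0) h2).and
      (Primrec.eq.comp (primrec_gcd.comp
        (Primrec.nat_div.comp (Primrec.succ.comp h1) (Primrec.const 2)) h2) (Primrec.const 1))
  have hg := primrec_gcd.comp ha hb
  have hcode : Primrec fun n => Nat.pair (2 * (a n / Nat.gcd (a n) (b n)))
      (b n / Nat.gcd (a n) (b n)) :=
    Primrec₂.natPair.comp (Primrec.nat_double.comp (Primrec.nat_div.comp ha hg))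
      (Primrec.nat_div.comp hb hg)
  refine (Primrec.list_length.comp ((Primrec.listFilter hp).comp
    (Primrec.list_range.comp hcode))).of_eq fun n => ?_
  rw [encode_rat_eq, (num_den_natCast_div _ _ (hpos n)).1, (num_den_natCast_div _ _ (hpos n)).2]
  rfl

end Computability

section RelativeRecursion

theorem RecIn.of_partrec (O : ℕ →. ℕ) {f : ℕ →. ℕ} (hf : Nat.Partrec f) : RecIn O f := by
  induction hf with
  | zero => exact RecIn.zero
  | succ => exact RecIn.succ
  | left => exact RecIn.left
  | right => exact RecIn.right
  | pair _ _ hf hg => exact RecIn.pair hf hg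
  | comp _ _ hf hg => exact RecIn.comp hf hg
  | prec _ _ hf hg => exact RecIn.prec hf hg
  | rfind _ hf => exact RecIn.rfind hf

theorem RecIn.of_computable (O : ℕ →. ℕ) {f : ℕ → ℕ} (hf : Computable f) :
    RecIn O fun n => Part.some (f n) :=
  RecIn.of_partrec O (Partrec.nat_iff.1 hf)

theorem RecIn.of_eq {O f g : ℕ →. ℕ} (hf : RecIn O f) (h : ∀ n, f n = g n) : RecIn O g :=
  (funext h : f = g) ▸ hf

theorem RecIn.comp_some {O f : ℕ →. ℕ} {g : ℕ → ℕ} (hf : RecIn O f)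
    (hg : RecIn O fun n => Part.some (g n)) : RecIn O fun n => f (g n) :=
  (RecIn.comp hf hg).of_eq fun n => Part.bind_some (g n) f

theorem RecIn.pair_some {O : ℕ →. ℕ} {f g : ℕ → ℕ} (hf : RecIn O fun n => Part.some (f n))
    (hg : RecIn O fun n => Part.some (g n)) : RecIn O fun n => Part.some (Nat.pair (f n) (g n)) :=
  (RecIn.pair hf hg).of_eq fun n => by simp [Seq.seq]

/-- A sequence obtained by iterating a computable step that asks one oracle question each time
is recursive in the oracle. -/
theorem RecIn.iterate_query {o query v : ℕ → ℕ} {step : ℕ → ℕ → ℕ} (hquery : Computable query)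
    (hstep : Computable₂ step) (hzero : v 0 = 0)
    (hsucc : ∀ n, v (n + 1) = step (v n) (o (query (Nat.pair n (v n))))) :
    RecIn (fun n => Part.some (o n)) fun n => Part.some (v n) := by
  set O : ℕ →. ℕ := fun n => Part.some (o n) with hO
  have hright : RecIn O fun n : ℕ => Part.some n.unpair.2 := RecIn.right
  have hstate : RecIn O fun n : ℕ => Part.some n.unpair.2.unpair.2 := hright.comp_some hright
  have hanswer : RecIn O fun n : ℕ => Part.some (o (query n.unpair.2)) :=
    RecIn.comp_some (f := O) RecIn.oracle
      ((RecIn.of_computable O hquery).comp_some hright)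
  have hnext : RecIn O fun n : ℕ =>
      Part.some (step n.unpair.2.unpair.2 (o (query n.unpair.2))) := by
    have hs : Computable fun n : ℕ => step n.unpair.1 n.unpair.2 :=
      hstep.comp (Computable.fst.comp Computable.unpair) (Computable.snd.comp Computable.unpair)
    refine ((RecIn.of_computable O hs).comp_some (hstate.pair_some hanswer)).of_eq fun n => ?_
    simp
  have hinput : RecIn O fun n : ℕ => Part.some (Nat.pair 0 n) :=
    RecIn.of_computable O
      (Primrec₂.natPair.comp (Primrec.const 0) Primrec.id).to_comp
  refine ((RecIn.prec RecIn.zero hnext).comp_some hinput).of_eq fun n => ?_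
  simp only [Nat.unpaired, Nat.unpair_pair]
  induction n with
  | zero => rw [hzero]; rfl
  | succ n ih =>
    simp only [ih, hsucc]
    simp

/-- Every c.e. set of numbers is many-one reducible to the halting set. -/
theorem exists_reduction_haltingSet {p : ℕ → ℕ → Bool} (hp : Computable₂ p) :
    ∃ f : ℕ → ℕ, Computable f ∧ ∀ n, f n ∈ haltingSet ↔ ∃ s, p n s = true := by
  have hpart : Partrec fun n : ℕ => Nat.rfind fun s => Part.some (p n.unpair.1 s) :=
    Partrec.rfind (Computable.partrec
      (hp.comp (Computable.fst.comp (Computable.unpair.comp Computable.fst)) Computable.snd))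
  obtain ⟨c, hc⟩ := Nat.Partrec.Code.exists_code.1 (Partrec.nat_iff.1 hpart)
  refine ⟨fun n => Encodable.encode (c.curry n), ?_, fun n => ?_⟩
  · exact Computable.encode.comp
      (Nat.Partrec.Code.primrec₂_curry.comp (Primrec.const c) Primrec.id).to_comp
  · change (phi _ _).Dom ↔ _
    rw [phi, Denumerable.ofNat_encode, Nat.Partrec.Code.eval_curry, hc]
    refine Nat.rfind_dom'.trans ?_
    simp

end RelativeRecursion

section Strings

/-- The natural number written by a binary string, most significant bit first. -/
def strVal (σ : Str) : ℕ := σ.foldl (fun a b => 2 * a + b.toNat) 0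

@[simp]
theorem strVal_nil : strVal [] = 0 := rfl

theorem strVal_concat (σ : Str) (b : Bool) : strVal (σ ++ [b]) = 2 * strVal σ + b.toNat := by
  simp [strVal]

theorem strVal_append (σ τ : Str) :
    strVal (σ ++ τ) = strVal σ * 2 ^ τ.length + strVal τ := by
  induction τ using List.reverseRecOn with
  | nil => simp
  | append_singleton τ b ih =>
    rw [← List.append_assoc, strVal_concat, strVal_concat, ih, List.length_append,
      List.length_singleton, pow_succ]
    ring

theorem strVal_lt (σ : Str) : strVal σ < 2 ^ σ.length := by
  induction σ using List.reverseRecOn with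
  | nil => simp
  | append_singleton σ b ih =>
    rw [strVal_concat, List.length_append, List.length_singleton, pow_succ]
    have := b.toNat_le
    omega

theorem exists_strVal_eq (n m : ℕ) (h : m < 2 ^ n) : ∃ σ : Str, σ.length = n ∧ strVal σ = m := by
  induction n generalizing m with
  | zero => exact ⟨[], rfl, by simp at h; simp [h]⟩
  | succ n ih =>
    obtain ⟨σ, hl, hv⟩ := ih (m / 2) (by rw [pow_succ] at h; omega)
    refine ⟨σ ++ [decide (m % 2 = 1)], by simp [hl], ?_⟩
    rw [strVal_concat, hv]
    rcases Nat.mod_two_eq_zero_or_one m with h | h <;> simp [h] <;> omega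

theorem primrec_strVal : Primrec strVal :=
  Primrec.list_foldl Primrec.id (Primrec.const 0)
    ((Primrec.nat_add.comp (Primrec.nat_double.comp (Primrec.fst.comp Primrec.snd))
      ((Primrec.dom_bool Bool.toNat).comp (Primrec.snd.comp Primrec.snd))).to₂)

@[simp]
theorem length_pre (A : Seq) (n : ℕ) : (pre A n).length = n := List.length_ofFn

theorem pre_succ (A : Seq) (n : ℕ) : pre A (n + 1) = pre A n ++ [A n] := by
  rw [pre, List.ofFn_succ', List.concat_eq_append]
  rfl

theorem pre_isPrefix (A : Seq) {m n : ℕ} (h : m ≤ n) : pre A m <+: pre A n := by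
  induction n, h using Nat.le_induction with
  | base => exact List.prefix_refl _
  | succ n _ ih => rw [pre_succ]; exact ih.trans (List.prefix_append _ _)

theorem strVal_pre_succ (A : Seq) (n : ℕ) :
    strVal (pre A (n + 1)) = 2 * strVal (pre A n) + (A n).toNat := by
  rw [pre_succ, strVal_concat]

theorem sum_range_bits (A : Seq) (n : ℕ) :
    ∑ i ∈ Finset.range n, cond (A i) ((2 : ℝ)⁻¹ ^ (i + 1)) 0 = strVal (pre A n) / 2 ^ n := by
  induction n with
  | zero => simp [pre]
  | succ n ih =>
    rw [Finset.sum_range_succ, ih, strVal_pre_succ]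
    have h2 : (2 : ℝ) ^ n ≠ 0 := by positivity
    cases A n <;> simp [pow_succ] <;> field_simp

theorem summable_half_pow_succ : Summable fun n : ℕ => (2 : ℝ)⁻¹ ^ (n + 1) :=
  (summable_nat_add_iff 1).2 (summable_geometric_of_lt_one (by norm_num) (by norm_num))

theorem summable_bits (A : Seq) : Summable fun n : ℕ => cond (A n) ((2 : ℝ)⁻¹ ^ (n + 1)) 0 := by
  refine Summable.of_nonneg_of_le (fun n => ?_) (fun n => ?_) summable_half_pow_succ
  · cases A n <;> simp
  · cases A n <;> simp

theorem strVal_pre_le_binExp (A : Seq) (n : ℕ) : (strVal (pre A n) : ℝ) / 2 ^ n ≤ binExp A := by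
  rw [← sum_range_bits]
  refine (summable_bits A).sum_le_tsum _ fun i _ => ?_
  cases A i <;> simp

theorem binExp_le_strVal_pre (A : Seq) (n : ℕ) :
    binExp A ≤ (strVal (pre A n) + 1 : ℝ) / 2 ^ n := by
  have hgeom : ∑' i : ℕ, (2 : ℝ)⁻¹ ^ (i + n + 1) = 1 / 2 ^ n := by
    have : ∀ i : ℕ, (2 : ℝ)⁻¹ ^ (i + n + 1) = (2⁻¹ ^ (n + 1)) * 2⁻¹ ^ i := fun i => by ring
    simp_rw [this]
    rw [tsum_mul_left, tsum_geometric_of_lt_one (by norm_num) (by norm_num)]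
    rw [pow_succ, inv_pow]
    ring
  have htail : ∑' i : ℕ, cond (A (i + n)) ((2 : ℝ)⁻¹ ^ (i + n + 1)) 0 ≤ 1 / 2 ^ n := by
    rw [← hgeom]
    refine Summable.tsum_le_tsum (fun i => ?_)
      ((summable_nat_add_iff (f := fun n : ℕ => cond (A n) ((2 : ℝ)⁻¹ ^ (n + 1)) 0) n).2
        (summable_bits A))
      ((summable_nat_add_iff (f := fun n : ℕ => (2 : ℝ)⁻¹ ^ (n + 1)) n).2 summable_half_pow_succ)
    cases A (i + n) <;> simp
  rw [binExp, ← (summable_bits A).sum_add_tsum_nat_add n, sum_range_bits, add_div]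
  linarith

/-- The dyadic truncations of a sequence increase. -/
theorem monotone_strVal_pre_div (A : Seq) :
    Monotone fun n => (strVal (pre A n) : ℝ) / 2 ^ n := by
  refine monotone_nat_of_le_succ fun n => ?_
  simp only [← sum_range_bits, Finset.sum_range_succ]
  cases A n <;> simp

theorem strVal_pre_lt_binExp (A : Seq) {n m : ℕ} (hnm : n ≤ m) (hm : A m = true) :
    (strVal (pre A n) : ℝ) / 2 ^ n < binExp A := by
  refine ((monotone_strVal_pre_div A) hnm).trans_lt
    (lt_of_lt_of_le ?_ (strVal_pre_le_binExp A (m + 1)))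
  simp [← sum_range_bits, Finset.sum_range_succ, hm]

end Strings

section Measure

open MeasureTheory

theorem mem_cyl_pre (A : Seq) (n : ℕ) : A ∈ cyl (pre A n) := by
  simp [cyl]

theorem isPrefix_pre_of_mem_cyl {A : Seq} {σ : Str} (h : A ∈ cyl σ) {n : ℕ}
    (hn : σ.length ≤ n) : σ <+: pre A n := by
  have h' : pre A σ.length = σ := h
  have := pre_isPrefix A hn
  rwa [h'] at this

theorem cyl_subset_cyl {σ τ : Str} (h : σ <+: τ) : cyl τ ⊆ cyl σ := by
  intro A (hA : pre A τ.length = τ)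
  have h1 := pre_isPrefix A h.length_le
  rw [hA] at h1
  change pre A σ.length = σ
  exact (List.prefix_of_prefix_length_le h1 h (by simp)).eq_of_length (by simp)

theorem isPrefix_or_isPrefix_of_mem_cyl {A : Seq} {σ τ : Str} (hσ : A ∈ cyl σ) (hτ : A ∈ cyl τ) :
    σ <+: τ ∨ τ <+: σ :=
  List.prefix_or_prefix_of_prefix (isPrefix_pre_of_mem_cyl hσ (le_max_left _ τ.length))
    (isPrefix_pre_of_mem_cyl hτ (le_max_right σ.length _))

theorem measurableSet_cyl (σ : Str) : MeasurableSet (cyl σ) := by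
  have : cyl σ = (fun A : Seq => fun i : Fin σ.length => A i) ⁻¹'
      {f | List.ofFn f = σ} := rfl
  rw [this]
  exact (measurable_pi_lambda _ fun i => measurable_pi_apply _) (Set.toFinite _).measurableSet

/-- Kraft's inequality, localized to a set containing the cylinders. -/
theorem tsum_le_measure_of_prefixFree {μ : Measure Seq} (hμ : FairCoin μ) {ι : Type*} [Countable ι]
    (S : ι → Str) (hS : ∀ i j, S i <+: S j → i = j) {V : Set Seq} (hV : ∀ i, cyl (S i) ⊆ V) :
    ∑' i, (2 : ℝ≥0∞)⁻¹ ^ (S i).length ≤ μ V := by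
  have hdisj : Pairwise (Function.onFun Disjoint fun i => cyl (S i)) := by
    intro i j hij
    refine Set.disjoint_left.2 fun A hi hj => hij ?_
    rcases isPrefix_or_isPrefix_of_mem_cyl hi hj with h | h
    · exact hS _ _ h
    · exact (hS _ _ h).symm
  calc ∑' i, (2 : ℝ≥0∞)⁻¹ ^ (S i).length = ∑' i, μ (cyl (S i)) :=
        tsum_congr fun i => (hμ _).symm
    _ = μ (⋃ i, cyl (S i)) := (measure_iUnion hdisj fun i => measurableSet_cyl _).symm
    _ ≤ μ V := measure_mono (Set.iUnion_subset hV)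

theorem measure_univ_of_fairCoin {μ : Measure Seq} (hμ : FairCoin μ) : μ Set.univ = 1 := by
  have h : cyl [] = Set.univ := Set.eq_univ_of_forall fun A => by simp [cyl, pre]
  rw [← h, hμ]
  simp

theorem summable_of_prefixFree {μ : Measure Seq} (hμ : FairCoin μ) {S : Set Str}
    (hS : PrefixFree S) : Summable fun σ : Str => if σ ∈ S then (2 : ℝ)⁻¹ ^ σ.length else 0 := by
  have h := tsum_le_measure_of_prefixFree hμ (fun σ : S => (σ : Str))
    (fun σ τ h => Subtype.ext (hS _ σ.2 _ τ.2 h)) (fun σ => Set.subset_univ _)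
  rw [measure_univ_of_fairCoin hμ,
    tsum_subtype S fun σ : Str => (2 : ℝ≥0∞)⁻¹ ^ σ.length] at h
  refine (ENNReal.summable_toReal (h.trans_lt ENNReal.one_lt_top).ne).congr fun σ => ?_
  by_cases hσ : σ ∈ S <;> simp [hσ]

end Measure

section Complexity

theorem exists_length_le_of_cplx_le {M : Str →. Str} {τ : Str} {n : ℕ} (h : Cplx M τ ≤ n) :
    ∃ σ, τ ∈ M σ ∧ σ.length ≤ n := by
  by_contra! hcon
  have : ((n + 1 : ℕ) : ℕ∞) ≤ Cplx M τ := by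
    refine le_sInf ?_
    rintro _ ⟨σ, hσ, rfl⟩
    exact Nat.cast_le.2 (hcon σ hσ)
  exact absurd (Nat.cast_le.1 (this.trans h)) (by omega)

theorem cplx_le_of_mem {M : Str →. Str} {σ τ : Str} (h : τ ∈ M σ) : Cplx M τ ≤ σ.length :=
  sInf_le ⟨σ, h, rfl⟩

/-- A universal machine describes the outputs of any prefix-free machine with constant loss. -/
theorem UniversalPFMachine.exists_const {U : Str →. Str} (hU : UniversalPFMachine U)
    {M : Str →. Str} (hM : PrefixFreeMachine M) :
    ∃ c : ℕ, ∀ σ τ, τ ∈ M σ → ∃ ρ, τ ∈ U ρ ∧ ρ.length ≤ σ.length + c := by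
  obtain ⟨c, hc⟩ := hU.2 M hM
  refine ⟨c, fun σ τ h => exists_length_le_of_cplx_le ((hc τ).trans ?_)⟩
  push_cast
  gcongr
  exact cplx_le_of_mem h

end Complexity

section Requests

variable (r : ℕ → Option (ℕ × Str))

/-- The length asked for by the `k`-th request. -/
def reqLen (k : ℕ) : ℕ := ((r k).map Prod.fst).getD 0

/-- The exponent of a common denominator for the weights of the first `k` requests. -/
def reqExp (k : ℕ) : ℕ := ∑ j ∈ Finset.range k, reqLen r j

/-- The total weight of the first `k` requests, scaled by `2 ^ reqExp r k`. -/
def reqSum (k : ℕ) : ℕ :=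
  ∑ j ∈ Finset.range k, if (r j).isSome then 2 ^ (reqExp r k - reqLen r j) else 0

/-- The total weight of the first `k` requests, rounded up to a multiple of
`2 ^ (-(reqLen r k + 1))` and scaled by the inverse of that number. -/
def reqStart (k : ℕ) : ℕ :=
  (reqSum r k * 2 ^ (reqLen r k + 1) + (2 ^ reqExp r k - 1)) / 2 ^ reqExp r k

/-- The weight of the `k`-th request. -/
noncomputable def reqWeight (k : ℕ) : ℝ := if (r k).isSome then (2 : ℝ)⁻¹ ^ reqLen r k else 0

/-- The machine that serves the `k`-th request on the string of length `reqLen r k + 1` with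
value `reqStart r k`. -/
def reqMachine : Str →. Str := fun ρ =>
  Nat.rfindOpt fun k => (r k).bind fun p =>
    if ρ.length = reqLen r k + 1 ∧ strVal ρ = reqStart r k then some p.2 else none

variable {r}

theorem primrec_reqLen (hr : Primrec r) : Primrec (reqLen r) :=
  Primrec.option_getD.comp (Primrec.option_map hr (Primrec.fst.comp Primrec.snd).to₂)
    (Primrec.const 0)

theorem primrec_reqExp (hr : Primrec r) : Primrec (reqExp r) :=
  primrec_sum_range ((primrec_reqLen hr).comp Primrec.snd).to₂ Primrec.id

theorem primrec_reqSum (hr : Primrec r) : Primrec (reqSum r) := by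
  refine primrec_sum_range (f := fun k j =>
    if (r j).isSome then 2 ^ (reqExp r k - reqLen r j) else 0) ?_ Primrec.id
  exact Primrec.ite (Primrec.eq.comp (Primrec.option_isSome.comp (hr.comp Primrec.snd))
      (Primrec.const true))
    (primrec_two_pow.comp (Primrec.nat_sub.comp ((primrec_reqExp hr).comp Primrec.fst)
      ((primrec_reqLen hr).comp Primrec.snd)))
    (Primrec.const 0)

theorem primrec_reqStart (hr : Primrec r) : Primrec (reqStart r) := by
  have hD := primrec_two_pow.comp (primrec_reqExp hr)
  exact Primrec.nat_div.comp
    (Primrec.nat_add.comp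
      (Primrec.nat_mul.comp (primrec_reqSum hr)
        (primrec_two_pow.comp (Primrec.succ.comp (primrec_reqLen hr))))
      (Primrec.nat_sub.comp hD (Primrec.const 1))) hD

theorem partrec_reqMachine (hr : Primrec r) : Partrec (reqMachine r) := by
  refine Partrec.rfindOpt (Primrec.to_comp ?_)
  refine Primrec.option_bind (hr.comp Primrec.snd) ?_
  have hk : Primrec fun q : (Str × ℕ) × (ℕ × Str) => q.1.2 := Primrec.snd.comp Primrec.fst
  have hρ : Primrec fun q : (Str × ℕ) × (ℕ × Str) => q.1.1 := Primrec.fst.comp Primrec.fst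
  exact Primrec.ite
    ((Primrec.eq.comp (Primrec.list_length.comp hρ)
        (Primrec.succ.comp ((primrec_reqLen hr).comp hk))).and
      (Primrec.eq.comp (primrec_strVal.comp hρ) ((primrec_reqStart hr).comp hk)))
    (Primrec.option_some.comp (Primrec.snd.comp Primrec.snd)) (Primrec.const none)

theorem reqSum_div (k : ℕ) :
    (reqSum r k : ℝ) / 2 ^ reqExp r k = ∑ j ∈ Finset.range k, reqWeight r j := by
  rw [reqSum, Nat.cast_sum, Finset.sum_div]
  refine Finset.sum_congr rfl fun j hj => ?_
  have hle : reqLen r j ≤ reqExp r k :=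
    Finset.single_le_sum (f := reqLen r) (fun _ _ => Nat.zero_le _) hj
  unfold reqWeight
  split_ifs
  · push_cast
    rw [pow_sub₀ _ two_ne_zero hle, inv_pow]
    field_simp
  · simp

theorem sum_reqWeight_le_reqStart (k : ℕ) :
    ∑ j ∈ Finset.range k, reqWeight r j ≤ (reqStart r k : ℝ) / 2 ^ (reqLen r k + 1) := by
  have hD : 0 < 2 ^ reqExp r k := by positivity
  have h : reqSum r k * 2 ^ (reqLen r k + 1) ≤ reqStart r k * 2 ^ reqExp r k := by
    have := Nat.lt_div_mul_add hD (a := reqSum r k * 2 ^ (reqLen r k + 1) + (2 ^ reqExp r k - 1))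
    unfold reqStart
    omega
  rw [← reqSum_div, div_le_div_iff₀ (by positivity) (by positivity)]
  exact_mod_cast h

theorem reqStart_succ_le (k : ℕ) (hk : (r k).isSome) :
    (reqStart r k + 1 : ℝ) / 2 ^ (reqLen r k + 1) ≤
        ∑ j ∈ Finset.range (k + 1), reqWeight r j ∧
      (reqStart r k : ℝ) / 2 ^ (reqLen r k + 1) <
        ∑ j ∈ Finset.range (k + 1), reqWeight r j := by
  have hD : 0 < 2 ^ reqExp r k := by positivity
  have h : reqStart r k * 2 ^ reqExp r k < reqSum r k * 2 ^ (reqLen r k + 1) + 2 ^ reqExp r k := by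
    have := Nat.div_mul_le_self (reqSum r k * 2 ^ (reqLen r k + 1) + (2 ^ reqExp r k - 1))
      (2 ^ reqExp r k)
    unfold reqStart
    omega
  have h' : (reqStart r k * 2 ^ reqExp r k : ℝ) <
      reqSum r k * 2 ^ (reqLen r k + 1) + 2 ^ reqExp r k := by exact_mod_cast h
  have hlt : (reqStart r k : ℝ) / 2 ^ (reqLen r k + 1) <
      ∑ j ∈ Finset.range k, reqWeight r j + 1 / 2 ^ (reqLen r k + 1) := by
    rw [← reqSum_div, div_add_div _ _ (by positivity) (by positivity),
      div_lt_div_iff₀ (by positivity) (by positivity)]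
    have hp : (0 : ℝ) < 2 ^ (reqLen r k + 1) := by positivity
    nlinarith
  have hw : reqWeight r k = 1 / 2 ^ (reqLen r k + 1) + 1 / 2 ^ (reqLen r k + 1) := by
    rw [reqWeight, if_pos hk, inv_pow, pow_succ]
    field_simp
    norm_num
  have hpos : (0 : ℝ) < 1 / 2 ^ (reqLen r k + 1) := by positivity
  rw [Finset.sum_range_succ, hw, add_div]
  constructor <;> linarith

theorem reqWeight_nonneg (k : ℕ) : 0 ≤ reqWeight r k := by
  unfold reqWeight
  split_ifs <;> positivity

theorem monotone_sum_reqWeight : Monotone fun k => ∑ j ∈ Finset.range k, reqWeight r j :=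
  monotone_nat_of_le_succ fun k => by
    rw [Finset.sum_range_succ]
    linarith [reqWeight_nonneg (r := r) k]

/-- Strings serving distinct requests lie in disjoint dyadic intervals. -/
theorem req_index_eq_of_isPrefix {ρ ρ' : Str} {k k' : ℕ} (hk : (r k).isSome) (hk' : (r k').isSome)
    (hl : ρ.length = reqLen r k + 1) (hv : strVal ρ = reqStart r k)
    (hl' : ρ'.length = reqLen r k' + 1) (hv' : strVal ρ' = reqStart r k') (hpre : ρ <+: ρ') :
    k = k' := by
  obtain ⟨η, rfl⟩ := hpre
  have hlow : (strVal ρ : ℝ) / 2 ^ ρ.length ≤ strVal (ρ ++ η) / 2 ^ (ρ ++ η).length := by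
    rw [strVal_append, List.length_append, div_le_div_iff₀ (by positivity) (by positivity), pow_add]
    push_cast
    have : (0 : ℝ) ≤ strVal η * 2 ^ ρ.length := by positivity
    linarith
  have hhigh : (strVal (ρ ++ η) : ℝ) / 2 ^ (ρ ++ η).length < (strVal ρ + 1) / 2 ^ ρ.length := by
    have hη : (strVal η : ℝ) < 2 ^ η.length := by exact_mod_cast strVal_lt η
    rw [strVal_append, List.length_append, div_lt_div_iff₀ (by positivity) (by positivity), pow_add]
    push_cast
    have hp : (0 : ℝ) < 2 ^ ρ.length := by positivity
    nlinarith
  rw [hl', hv', hv, hl] at hlow hhigh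
  rcases lt_trichotomy k k' with h | h | h
  · have := monotone_sum_reqWeight (r := r) (Nat.succ_le_of_lt h)
    have h1 := (reqStart_succ_le k hk).1
    have h2 := sum_reqWeight_le_reqStart (r := r) k'
    simp only [Nat.succ_eq_add_one] at this
    linarith
  · exact h
  · have := monotone_sum_reqWeight (r := r) (Nat.succ_le_of_lt h)
    have h1 := (reqStart_succ_le k' hk').2
    have h2 := sum_reqWeight_le_reqStart (r := r) k
    simp only [Nat.succ_eq_add_one] at this
    linarith

theorem exists_request_of_mem_reqMachine {ρ τ : Str} (h : τ ∈ reqMachine r ρ) :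
    ∃ k ℓ, r k = some (ℓ, τ) ∧ ρ.length = reqLen r k + 1 ∧ strVal ρ = reqStart r k := by
  obtain ⟨k, hk⟩ := Nat.rfindOpt_spec h
  rw [Option.mem_def, Option.bind_eq_some_iff] at hk
  obtain ⟨⟨ℓ, τ'⟩, h1, h2⟩ := hk
  split_ifs at h2 with hc
  · obtain rfl : τ' = τ := by simpa using h2
    exact ⟨k, ℓ, h1, hc⟩

theorem prefixFreeMachine_reqMachine (hr : Primrec r) : PrefixFreeMachine (reqMachine r) := by
  refine ⟨partrec_reqMachine hr, fun ρ hρ ρ' hρ' hpre => ?_⟩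
  obtain ⟨k, ℓ, hk, hl, hv⟩ := exists_request_of_mem_reqMachine (Part.get_mem hρ)
  obtain ⟨k', ℓ', hk', hl', hv'⟩ := exists_request_of_mem_reqMachine (Part.get_mem hρ')
  have := req_index_eq_of_isPrefix (by simp [hk]) (by simp [hk']) hl hv hl' hv' hpre
  exact hpre.eq_of_length (by rw [hl, hl', this])

theorem exists_mem_reqMachine (hsum : ∀ n, ∑ j ∈ Finset.range n, reqWeight r j ≤ 1)
    {k ℓ : ℕ} {τ : Str} (hk : r k = some (ℓ, τ)) :
    ∃ ρ, τ ∈ reqMachine r ρ ∧ ρ.length = ℓ + 1 := by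
  have hlen : reqLen r k = ℓ := by simp [reqLen, hk]
  have hlt : reqStart r k < 2 ^ (ℓ + 1) := by
    have := ((reqStart_succ_le k (by simp [hk])).2).trans_le (hsum (k + 1))
    rw [div_lt_one (by positivity), hlen] at this
    exact_mod_cast this
  obtain ⟨ρ, hl, hv⟩ := exists_strVal_eq _ _ hlt
  refine ⟨ρ, ?_, hl⟩
  have hdom : (reqMachine r ρ).Dom := by
    refine Nat.rfindOpt_dom.2 ⟨k, τ, ?_⟩
    rw [Option.mem_def, hk, Option.bind_some, if_pos ⟨by rw [hl, hlen], hv⟩]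
  obtain ⟨k', ℓ', hk', hl', hv'⟩ := exists_request_of_mem_reqMachine (Part.get_mem hdom)
  have := req_index_eq_of_isPrefix (r := r) (by simp [hk]) (by simp [hk']) (by rw [hl, hlen]) hv
    hl' hv' (List.prefix_refl ρ)
  subst this
  have : (ℓ, τ) = (ℓ', (reqMachine r ρ).get hdom) := by rw [hk] at hk'; exact Option.some.inj hk'
  have hτ : τ = (reqMachine r ρ).get hdom := (Prod.ext_iff.1 this).2
  exact hτ ▸ Part.get_mem hdom

/-- A universal prefix-free machine serves every primitive recursive list of requests of total
weight at most one, up to an additive constant. -/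
theorem UniversalPFMachine.exists_const_of_requests {U : Str →. Str} (hU : UniversalPFMachine U)
    (hr : Primrec r) (hsum : ∑' k, (r k).elim 0 (fun p => (2 : ℝ≥0∞)⁻¹ ^ p.1) ≤ 1) :
    ∃ c : ℕ, ∀ k ℓ τ, r k = some (ℓ, τ) → ∃ ρ, τ ∈ U ρ ∧ ρ.length ≤ ℓ + c := by
  have hweight : ∀ k, ENNReal.ofReal (reqWeight r k) =
      (r k).elim 0 (fun p => (2 : ℝ≥0∞)⁻¹ ^ p.1) := fun k => by
    unfold reqWeight reqLen
    cases r k with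
    | none => simp
    | some p => simp [ENNReal.ofReal_pow, ENNReal.ofReal_inv_of_pos, ENNReal.inv_pow]
  have hpartial : ∀ n, ∑ j ∈ Finset.range n, reqWeight r j ≤ 1 := fun n => by
    rw [← ENNReal.ofReal_le_one, ENNReal.ofReal_sum_of_nonneg fun i _ => reqWeight_nonneg i]
    simp_rw [hweight]
    exact (ENNReal.sum_le_tsum _).trans hsum
  obtain ⟨c, hc⟩ := hU.exists_const (prefixFreeMachine_reqMachine hr)
  refine ⟨c + 1, fun k ℓ τ hk => ?_⟩
  obtain ⟨σ, hσ, hl⟩ := exists_mem_reqMachine hpartial hk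
  obtain ⟨ρ, hρ, hle⟩ := hc σ τ hσ
  exact ⟨ρ, hρ, by omega⟩

end Requests

section Approximation

open Encodable Nat.Partrec

/-- The code `c` computes the machine `U` on codes of strings. -/
def IsCodeOf (c : Code) (U : Str →. Str) : Prop :=
  ∀ n, c.eval n = Part.bind (decode₂ Str n) fun σ => (U σ).map encode

theorem exists_isCodeOf {U : Str →. Str} (hU : Partrec U) : ∃ c, IsCodeOf c U := by
  obtain ⟨c, hc⟩ := Code.exists_code.1 (Partrec.bind_decode₂_iff.1 hU)
  exact ⟨c, fun n => by rw [hc]⟩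

/-- The finite set of strings on which the computation of `c` is seen to halt by stage `s`. -/
noncomputable def stageDom (c : Code) (s : ℕ) : Finset Str :=
  ((Finset.range s).filter fun k => (c.evaln s k).isSome).image fun k =>
    (decode (α := Str) k).getD []

/-- The halting probability at stage `s`, scaled by `2 ^ s`. -/
def omegaNum (c : Code) (s : ℕ) : ℕ :=
  ∑ k ∈ Finset.range s,
    if (c.evaln s k).isSome then 2 ^ (s - ((decode (α := Str) k).getD []).length) else 0

/-- A bound for the outputs seen by stage `s`. -/
def outBound (c : Code) (s : ℕ) : ℕ := ∑ k ∈ Finset.range s, (c.evaln s k).getD 0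

theorem primrec_evaln_diag (c : Code) : Primrec₂ fun s k : ℕ => c.evaln s k :=
  Code.primrec_evaln.comp
    (Primrec.pair (Primrec.pair Primrec.fst (Primrec.const c)) Primrec.snd)

theorem primrec_omegaNum (c : Code) : Primrec (omegaNum c) := by
  refine primrec_sum_range (f := fun s k => if (c.evaln s k).isSome then
    2 ^ (s - ((decode (α := Str) k).getD []).length) else 0) ?_ Primrec.id
  exact Primrec.ite (Primrec.eq.comp (Primrec.option_isSome.comp (primrec_evaln_diag c))
      (Primrec.const true))
    (primrec_two_pow.comp (Primrec.nat_sub.comp Primrec.fst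
      (Primrec.list_length.comp (Primrec.option_getD.comp
        (Primrec.decode.comp Primrec.snd) (Primrec.const [])))))
    (Primrec.const 0)

theorem primrec_outBound (c : Code) : Primrec (outBound c) :=
  primrec_sum_range (f := fun s k => (c.evaln s k).getD 0)
    (Primrec.option_getD.comp (primrec_evaln_diag c) (Primrec.const 0)) Primrec.id

theorem sum_le_omega {U : Str →. Str} {μ : MeasureTheory.Measure Seq} (hμ : FairCoin μ)
    (hU : PrefixFree {σ | (U σ).Dom}) (F : Finset Str) (hF : ∀ σ ∈ F, (U σ).Dom) :
    ∑ σ ∈ F, (2 : ℝ)⁻¹ ^ σ.length ≤ Omega U := by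
  refine le_trans (le_of_eq (Finset.sum_congr rfl fun σ hσ => (if_pos (hF σ hσ)).symm))
    ((summable_of_prefixFree hμ hU).sum_le_tsum F fun σ _ => ?_)
  split_ifs <;> positivity

theorem IsCodeOf.exists_decode {U : Str →. Str} {c : Code} (hc : IsCodeOf c U)
    {s k : ℕ} (h : (c.evaln s k).isSome) :
    ∃ σ : Str, k = encode σ ∧ (decode (α := Str) k).getD [] = σ := by
  obtain ⟨x, hx⟩ := Option.isSome_iff_exists.1 h
  have hx' := Code.evaln_sound (Option.mem_def.2 hx)
  rw [hc, Part.mem_bind_iff] at hx'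
  obtain ⟨σ, hσ, -⟩ := hx'
  obtain rfl := mem_decode₂.1 (Part.mem_ofOption.1 hσ)
  exact ⟨σ, rfl, by simp⟩

theorem IsCodeOf.mem_stageDom {U : Str →. Str} {c : Code} (hc : IsCodeOf c U)
    {s : ℕ} {σ : Str} :
    σ ∈ stageDom c s ↔ (c.evaln s (encode σ)).isSome := by
  simp only [stageDom, Finset.mem_image, Finset.mem_filter, Finset.mem_range]
  constructor
  · rintro ⟨k, ⟨-, hk⟩, rfl⟩
    obtain ⟨σ, rfl, h⟩ := hc.exists_decode hk
    rwa [h]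
  · intro h
    obtain ⟨x, hx⟩ := Option.isSome_iff_exists.1 h
    exact ⟨encode σ, ⟨Code.evaln_bound (Option.mem_def.2 hx), h⟩, by simp⟩

theorem IsCodeOf.eval_encode {U : Str →. Str} {c : Code} (hc : IsCodeOf c U)
    (σ : Str) : c.eval (encode σ) = (U σ).map encode := by
  rw [hc]
  simp

theorem IsCodeOf.dom_of_mem_stageDom {U : Str →. Str} {c : Code} (hc : IsCodeOf c U)
    {s : ℕ} {σ : Str} (h : σ ∈ stageDom c s) : (U σ).Dom := by
  obtain ⟨x, hx⟩ := Option.isSome_iff_exists.1 (hc.mem_stageDom.1 h)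
  have hx' := Code.evaln_sound (Option.mem_def.2 hx)
  rw [hc.eval_encode] at hx'
  exact (Part.dom_iff_mem.2 ⟨x, hx'⟩ : ((U σ).map encode).Dom)

theorem IsCodeOf.exists_mem_stageDom {U : Str →. Str} {c : Code} (hc : IsCodeOf c U)
    {σ : Str} (h : (U σ).Dom) : ∃ s, σ ∈ stageDom c s := by
  have : encode ((U σ).get h) ∈ c.eval (encode σ) := by
    rw [hc.eval_encode]
    exact Part.mem_map _ (Part.get_mem h)
  obtain ⟨s, hs⟩ := Code.evaln_complete.1 this
  exact ⟨s, hc.mem_stageDom.2 (Option.isSome_iff_exists.2 ⟨_, hs⟩)⟩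

theorem IsCodeOf.monotone_stageDom {U : Str →. Str} {c : Code} (hc : IsCodeOf c U) :
    Monotone (stageDom c) := by
  intro s t hst σ hσ
  obtain ⟨x, hx⟩ := Option.isSome_iff_exists.1 (hc.mem_stageDom.1 hσ)
  exact hc.mem_stageDom.2 (Option.isSome_iff_exists.2 ⟨x, Code.evaln_mono hst hx⟩)

theorem IsCodeOf.length_le_outBound {U : Str →. Str} {c : Code} (hc : IsCodeOf c U)
    {s : ℕ} {σ τ : Str} (hσ : σ ∈ stageDom c s) (hτ : τ ∈ U σ) :
    τ.length ≤ outBound c s := by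
  obtain ⟨x, hx⟩ := Option.isSome_iff_exists.1 (hc.mem_stageDom.1 hσ)
  have hx' := Code.evaln_sound (Option.mem_def.2 hx)
  have hτ' : encode τ ∈ c.eval (encode σ) := by
    rw [hc.eval_encode]
    exact Part.mem_map _ hτ
  obtain rfl := Part.mem_unique hx' hτ'
  refine (length_le_encode τ).trans ?_
  have := Finset.single_le_sum (f := fun k => (c.evaln s k).getD 0) (fun _ _ => Nat.zero_le _)
    (Finset.mem_range.2 (Code.evaln_bound (Option.mem_def.2 hx)))
  simpa only [hx] using! this

theorem IsCodeOf.omegaNum_div {U : Str →. Str} {c : Code} (hc : IsCodeOf c U)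
    (s : ℕ) :
    (omegaNum c s : ℝ) / 2 ^ s = ∑ σ ∈ stageDom c s, (2 : ℝ)⁻¹ ^ σ.length := by
  rw [stageDom, Finset.sum_image, omegaNum, Nat.cast_sum, Finset.sum_div, Finset.sum_filter]
  · refine Finset.sum_congr rfl fun k hk => ?_
    split_ifs with h
    · obtain ⟨σ, rfl, hσ⟩ := hc.exists_decode h
      have : σ.length ≤ s := (length_le_encode σ).trans (Finset.mem_range.1 hk).le
      rw [hσ]
      push_cast
      rw [pow_sub₀ _ two_ne_zero this, inv_pow]
      field_simp
    · simp
  · intro k hk k' hk' heq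
    obtain ⟨σ, rfl, hσ⟩ := hc.exists_decode (Finset.mem_filter.1 hk).2
    obtain ⟨σ', rfl, hσ'⟩ := hc.exists_decode (Finset.mem_filter.1 hk').2
    simpa using heq

theorem IsCodeOf.monotone_omegaNum_div {U : Str →. Str} {c : Code} (hc : IsCodeOf c U) :
    Monotone fun s => (omegaNum c s : ℝ) / 2 ^ s := by
  intro s t hst
  simp only [hc.omegaNum_div]
  exact Finset.sum_le_sum_of_subset_of_nonneg (hc.monotone_stageDom hst)
    fun _ _ _ => by positivity

theorem IsCodeOf.tendsto_omegaNum_div {U : Str →. Str} {c : Code} (hc : IsCodeOf c U)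
    {μ : MeasureTheory.Measure Seq} (hμ : FairCoin μ) (hU : PrefixFree {σ | (U σ).Dom}) :
    Filter.Tendsto (fun s => (omegaNum c s : ℝ) / 2 ^ s) Filter.atTop (nhds (Omega U)) := by
  refine tendsto_atTop_isLUB hc.monotone_omegaNum_div ⟨?_, fun b hb => ?_⟩
  · rintro _ ⟨s, rfl⟩
    simp only [hc.omegaNum_div]
    exact sum_le_omega hμ hU _ fun σ => hc.dom_of_mem_stageDom
  · refine (summable_of_prefixFree hμ hU).tsum_le_of_sum_le fun F => ?_
    have hex : ∀ σ : Str, ∃ s, (U σ).Dom → σ ∈ stageDom c s := fun σ => by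
      by_cases h : (U σ).Dom
      · obtain ⟨s, hs⟩ := hc.exists_mem_stageDom h
        exact ⟨s, fun _ => hs⟩
      · exact ⟨0, fun h' => absurd h' h⟩
    choose g hg using hex
    refine le_trans ?_ (hb ⟨F.sup g, rfl⟩)
    simp only [hc.omegaNum_div]
    rw [← Finset.sum_filter]
    refine Finset.sum_le_sum_of_subset_of_nonneg (fun σ hσ => ?_) fun _ _ _ => by positivity
    obtain ⟨hσF, hdom⟩ := Finset.mem_filter.1 hσ
    exact hc.monotone_stageDom (Finset.le_sup hσF) (hg σ hdom)

theorem IsCodeOf.add_le_omega {U : Str →. Str} {c : Code} (hc : IsCodeOf c U)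
    {μ : MeasureTheory.Measure Seq} (hμ : FairCoin μ) (hU : PrefixFree {σ | (U σ).Dom})
    {s : ℕ} {σ : Str} (hσ : (U σ).Dom) (hs : σ ∉ stageDom c s) :
    (omegaNum c s : ℝ) / 2 ^ s + 2⁻¹ ^ σ.length ≤ Omega U := by
  rw [hc.omegaNum_div, add_comm, ← Finset.sum_insert (f := fun σ : Str => (2 : ℝ)⁻¹ ^ σ.length) hs]
  refine sum_le_omega hμ hU _ fun τ hτ => ?_
  rcases Finset.mem_insert.1 hτ with rfl | h
  · exact hσ
  · exact hc.dom_of_mem_stageDom h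

/-- Once the approximation to the halting probability is within `2 ^ (-n)` of its first `n` bits,
no further string of length less than `n` halts. -/
theorem IsCodeOf.mem_stageDom_of_lt {U : Str →. Str} {c : Code} (hc : IsCodeOf c U)
    {μ : MeasureTheory.Measure Seq} (hμ : FairCoin μ) (hU : PrefixFree {σ | (U σ).Dom})
    {A : Seq} (hA : binExp A = Omega U)
    {n s : ℕ}
    (hs : strVal (pre A n) * 2 ^ s < omegaNum c s * 2 ^ n + 2 ^ s) {σ : Str} (hσ : (U σ).Dom)
    (hn : σ.length < n) : σ ∈ stageDom c s := by
  by_contra hcon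
  have h1 := hc.add_le_omega hμ hU hσ hcon
  have h2 := binExp_le_strVal_pre A n
  have h3 : (strVal (pre A n) : ℝ) / 2 ^ n < omegaNum c s / 2 ^ s + 1 / 2 ^ n := by
    rw [div_add_div _ _ (by positivity) (by positivity),
      div_lt_div_iff₀ (by positivity) (by positivity)]
    have h : (strVal (pre A n) * 2 ^ s : ℝ) < omegaNum c s * 2 ^ n + 2 ^ s := by exact_mod_cast hs
    have hp : (0 : ℝ) < 2 ^ n := by positivity
    nlinarith
  have h4 : (1 : ℝ) / 2 ^ n + 1 / 2 ^ n ≤ 2⁻¹ ^ σ.length := by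
    obtain ⟨m, rfl⟩ : ∃ m, n = m + 1 := ⟨n - 1, by omega⟩
    have : (2 : ℝ)⁻¹ ^ m ≤ 2⁻¹ ^ σ.length :=
      pow_le_pow_of_le_one (by norm_num) (by norm_num) (by omega)
    refine le_trans (le_of_eq ?_) this
    rw [inv_pow, pow_succ]
    field_simp
    norm_num
  rw [add_div] at h2
  linarith

theorem IsCodeOf.exists_stage_lt {U : Str →. Str} {c : Code} (hc : IsCodeOf c U)
    {μ : MeasureTheory.Measure Seq} (hμ : FairCoin μ) (hU : PrefixFree {σ | (U σ).Dom})
    {A : Seq} (hA : binExp A = Omega U)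
    (n : ℕ) :
    ∃ s, strVal (pre A n) * 2 ^ s < omegaNum c s * 2 ^ n + 2 ^ s := by
  have hlt : (strVal (pre A n) : ℝ) / 2 ^ n - 1 / 2 ^ n < Omega U := by
    have := strVal_pre_le_binExp A n
    have hp : (0 : ℝ) < 1 / 2 ^ n := by positivity
    linarith
  obtain ⟨s, hs⟩ := ((hc.tendsto_omegaNum_div hμ hU).eventually_const_lt hlt).exists
  refine ⟨s, ?_⟩
  have h : (strVal (pre A n) : ℝ) / 2 ^ n < omegaNum c s / 2 ^ s + 1 / 2 ^ n := by linarith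
  rw [div_add_div _ _ (by positivity) (by positivity),
    div_lt_div_iff₀ (by positivity) (by positivity)] at h
  have hp : (0 : ℝ) < 2 ^ n := by positivity
  have h' : (strVal (pre A n) * 2 ^ s : ℝ) < omegaNum c s * 2 ^ n + 2 ^ s := by
    refine lt_of_mul_lt_mul_right ?_ hp.le
    linarith
  exact_mod_cast h'

end Approximation

section LeftCE

open Nat.Partrec

theorem UniversalPFMachine.exists_dom {U : Str →. Str} (hU : UniversalPFMachine U) :
    ∃ σ, (U σ).Dom := by
  have hr : Primrec fun k : ℕ => if k = 0 then some (0, ([] : Str)) else none :=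
    Primrec.ite (Primrec.eq.comp Primrec.id (Primrec.const 0)) (Primrec.const _) (Primrec.const _)
  obtain ⟨c, hc⟩ := hU.exists_const_of_requests hr (le_of_eq (by
    rw [tsum_eq_single 0 fun k hk => by simp [hk]]
    simp))
  obtain ⟨ρ, hρ, -⟩ := hc 0 0 [] rfl
  exact ⟨ρ, Part.dom_iff_mem.2 ⟨_, hρ⟩⟩

theorem leftCE_omega {μ : MeasureTheory.Measure Seq} (hμ : FairCoin μ)
    {U : Str →. Str} (hU : UniversalPFMachine U) : LeftCE (Omega U) := by
  obtain ⟨c, hc⟩ := exists_isCodeOf hU.1.1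
  obtain ⟨σ, hσ⟩ := hU.exists_dom
  obtain ⟨s₀, hs₀⟩ := hc.exists_mem_stageDom hσ
  have hmono := hc.monotone_omegaNum_div
  have hpos : ∀ n, 1 ≤ omegaNum c (n + s₀) := fun n => by
    have hmem := hc.monotone_stageDom (Nat.le_add_left s₀ n) hs₀
    have hle := Finset.single_le_sum (f := fun σ : Str => (2 : ℝ)⁻¹ ^ σ.length)
      (fun _ _ => by positivity) hmem
    rw [← hc.omegaNum_div] at hle
    rw [Nat.one_le_iff_ne_zero]
    intro h0
    rw [h0, Nat.cast_zero, zero_div] at hle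
    exact absurd hle (not_le.2 (by positivity))
  set q : ℕ → ℚ := fun n => ((omegaNum c (n + s₀) - 1 : ℕ) : ℚ) / (2 ^ (n + s₀) : ℕ) with hq
  have hqr : ∀ n, (q n : ℝ) = omegaNum c (n + s₀) / 2 ^ (n + s₀) - 2⁻¹ ^ (n + s₀) := fun n => by
    rw [hq]
    push_cast [Nat.cast_sub (hpos n)]
    rw [sub_div, one_div, inv_pow]
  have hadd : Primrec fun n => n + s₀ := Primrec.nat_add.comp Primrec.id (Primrec.const s₀)
  refine ⟨q, ?_, ?_, ?_⟩
  · exact computable_natCast_div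
      (Primrec.nat_sub.comp ((primrec_omegaNum c).comp hadd) (Primrec.const 1))
      (primrec_two_pow.comp hadd) fun n => by positivity
  · intro m n hmn
    have h1 : (omegaNum c (m + s₀) : ℝ) / 2 ^ (m + s₀) ≤ omegaNum c (n + s₀) / 2 ^ (n + s₀) :=
      hmono (by omega)
    have h2 : (2 : ℝ)⁻¹ ^ (n + s₀) < 2⁻¹ ^ (m + s₀) :=
      pow_lt_pow_right_of_lt_one₀ (by norm_num) (by norm_num) (by omega)
    have : (q m : ℝ) < q n := by
      rw [hqr, hqr]
      linarith
    exact_mod_cast this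
  · simp only [hqr]
    have h1 := (Filter.tendsto_add_atTop_iff_nat s₀).2 (hc.tendsto_omegaNum_div hμ hU.1.2)
    have h2 := (Filter.tendsto_add_atTop_iff_nat s₀).2
      (tendsto_pow_atTop_nhds_zero_of_lt_one (r := (2 : ℝ)⁻¹) (by norm_num) (by norm_num))
    simpa using h1.sub h2

end LeftCE

section StageSearch

open Nat.Partrec

/-- The first stage at which the approximation exceeds `(v - 1) / 2 ^ n`, where `p = (n, v)`. -/
def stageSearch (c : Code) (p : ℕ × ℕ) : Part ℕ :=
  Nat.rfind fun s => Part.some (decide (p.2 * 2 ^ s < omegaNum c s * 2 ^ p.1 + 2 ^ s))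

theorem partrec_stageSearch (c : Code) : Partrec (stageSearch c) := by
  have hs : Primrec fun p : (ℕ × ℕ) × ℕ => 2 ^ p.2 := primrec_two_pow.comp Primrec.snd
  have : PrimrecPred fun p : (ℕ × ℕ) × ℕ =>
      p.1.2 * 2 ^ p.2 < omegaNum c p.2 * 2 ^ p.1.1 + 2 ^ p.2 :=
    Primrec.nat_lt.comp
      (Primrec.nat_mul.comp (Primrec.snd.comp Primrec.fst) hs)
      (Primrec.nat_add.comp (Primrec.nat_mul.comp ((primrec_omegaNum c).comp Primrec.snd)
        (primrec_two_pow.comp (Primrec.fst.comp Primrec.fst))) hs)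
  refine Partrec.rfind (Computable.partrec ?_)
  exact this.decide.to_comp

theorem lt_of_mem_stageSearch {c : Code} {p : ℕ × ℕ} {s : ℕ} (h : s ∈ stageSearch c p) :
    p.2 * 2 ^ s < omegaNum c s * 2 ^ p.1 + 2 ^ s := by
  simpa using Nat.rfind_spec h

theorem IsCodeOf.exists_mem_stageSearch {U : Str →. Str} {c : Code} (hc : IsCodeOf c U)
    {μ : MeasureTheory.Measure Seq} (hμ : FairCoin μ) (hU : PrefixFree {σ | (U σ).Dom})
    {A : Seq} (hA : binExp A = Omega U) (n : ℕ) :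
    ∃ s, s ∈ stageSearch c (n, strVal (pre A n)) := by
  obtain ⟨s, hs⟩ := hc.exists_stage_lt hμ hU hA n
  refine Part.dom_iff_mem.1 (Nat.rfind_dom.2 ⟨s, ?_, fun _ => trivial⟩)
  simpa using hs

end StageSearch

section TuringReductions

open Encodable Nat.Partrec

theorem tsum_inv_two_pow_succ : ∑' n : ℕ, (2 : ℝ≥0∞)⁻¹ ^ (n + 1) = 1 := by
  rw [ENNReal.tsum_geometric_add_one, ENNReal.one_sub_inv_two, inv_inv]
  exact ENNReal.inv_mul_cancel two_ne_zero ENNReal.ofNat_ne_top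

theorem tsum_eq_tsum_pair (f : ℕ → ℝ≥0∞) : ∑' k, f k = ∑' (a) (b), f (Nat.pair a b) := by
  rw [← Nat.pairEquiv.tsum_eq, ENNReal.tsum_prod']
  rfl

theorem bool_toNat_eq_strVal_mod (A : Seq) (n : ℕ) :
    cond (A n) 1 0 = strVal (pre A (n + 1)) % 2 := by
  rw [strVal_pre_succ]
  cases A n <;> simp [Nat.add_mod]

theorem recIn_strVal_pre (A : Seq) :
    RecIn (oracleOf A) fun n => Part.some (strVal (pre A n)) := by
  refine RecIn.iterate_query (o := fun n => cond (A n) 1 0) (query := fun p => p.unpair.1)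
    (step := fun v b => 2 * v + b) (Computable.fst.comp Computable.unpair) ?_ rfl fun n => ?_
  · exact (Primrec.nat_add.comp (Primrec.nat_mul.comp (Primrec.const 2) Primrec.fst)
      Primrec.snd).to_comp
  · simp only [strVal_pre_succ, Nat.unpair_pair]
    cases A n <;> rfl

theorem turingLE_of_recIn_strVal_pre {A : Seq} {O : ℕ →. ℕ}
    (h : RecIn O fun n => Part.some (strVal (pre A n))) : TuringLE (oracleOf A) O := by
  have hsucc : RecIn O fun n => Part.some (strVal (pre A (n + 1))) :=
    RecIn.comp_some (g := fun n => n + 1) h (RecIn.of_computable O Computable.succ)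
  have hmod : Computable fun v : ℕ => v % 2 :=
    (Primrec.nat_mod.comp Primrec.id (Primrec.const 2)).to_comp
  exact (RecIn.comp_some (RecIn.of_computable O hmod) hsucc).of_eq fun n =>
    congrArg Part.some (bool_toNat_eq_strVal_mod A n).symm

theorem computable_of_eventually_false {A : Seq} {m : ℕ} (h : ∀ n, m ≤ n → A n = false) :
    Computable fun n => cond (A n) 1 0 := by
  have : Primrec fun n => ((pre A m).map fun b => cond b 1 0).getD n 0 :=
    (Primrec.list_getD 0).comp (Primrec.const _) Primrec.id
  refine this.to_comp.of_eq fun n => ?_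
  by_cases hn : n < m
  · simp [List.getD, pre, hn]
  · simp [List.getD, pre, hn, h n (not_lt.1 hn)]

theorem turingLE_haltingSet_of_binExp_eq_omega {μ : MeasureTheory.Measure Seq} (hμ : FairCoin μ)
    {U : Str →. Str} (hU : UniversalPFMachine U) {A : Seq} (hA : binExp A = Omega U) :
    TuringLE (oracleOf A) (oracleOfSet haltingSet) := by
  by_cases hev : ∃ m, ∀ n, m ≤ n → A n = false
  · obtain ⟨m, hm⟩ := hev
    exact RecIn.of_computable _ (computable_of_eventually_false hm)
  push Not at hev
  simp only [ne_eq, Bool.not_eq_false] at hev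
  obtain ⟨c, hc⟩ := exists_isCodeOf hU.1.1
  have hbit : ∀ n, A n = true ↔
      ∃ s, (2 * strVal (pre A n) + 1) * 2 ^ s < omegaNum c s * 2 ^ (n + 1) := fun n => by
    have hiff : (∃ s, (2 * strVal (pre A n) + 1) * 2 ^ s < omegaNum c s * 2 ^ (n + 1)) ↔
        ((2 * strVal (pre A n) + 1 : ℕ) : ℝ) / 2 ^ (n + 1) < Omega U := by
      have heq : ∀ s, (2 * strVal (pre A n) + 1) * 2 ^ s < omegaNum c s * 2 ^ (n + 1) ↔
          ((2 * strVal (pre A n) + 1 : ℕ) : ℝ) / 2 ^ (n + 1) < omegaNum c s / 2 ^ s := fun s => by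
        rw [div_lt_div_iff₀ (by positivity) (by positivity)]
        exact_mod_cast Iff.rfl
      simp only [heq]
      constructor
      · rintro ⟨s, hs⟩
        exact hs.trans_le
          (hc.monotone_omegaNum_div.ge_of_tendsto (hc.tendsto_omegaNum_div hμ hU.1.2) s)
      · intro h
        exact ((hc.tendsto_omegaNum_div hμ hU.1.2).eventually_const_lt h).exists
    rw [hiff, ← hA]
    constructor
    · intro h
      obtain ⟨m, hm, hAm⟩ := hev (n + 1)
      have := strVal_pre_lt_binExp A hm hAm
      rwa [strVal_pre_succ, h] at this
    · intro h
      by_contra hf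
      have := binExp_le_strVal_pre A (n + 1)
      rw [strVal_pre_succ, Bool.eq_false_iff.2 hf] at this
      push_cast at this h
      simp only [Bool.toNat_false, Nat.cast_zero, add_zero] at this
      linarith
  have hp : Computable₂ fun p s : ℕ =>
      decide ((2 * p.unpair.2 + 1) * 2 ^ s < omegaNum c s * 2 ^ (p.unpair.1 + 1)) := by
    have hfst : Primrec fun q : ℕ × ℕ => q.1.unpair.1 :=
      Primrec.fst.comp (Primrec.unpair.comp Primrec.fst)
    have hsnd : Primrec fun q : ℕ × ℕ => q.1.unpair.2 :=
      Primrec.snd.comp (Primrec.unpair.comp Primrec.fst)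
    have : PrimrecPred fun q : ℕ × ℕ =>
        (2 * q.1.unpair.2 + 1) * 2 ^ q.2 < omegaNum c q.2 * 2 ^ (q.1.unpair.1 + 1) :=
      Primrec.nat_lt.comp
        (Primrec.nat_mul.comp
          (Primrec.succ.comp (Primrec.nat_mul.comp (Primrec.const 2) hsnd))
          (primrec_two_pow.comp Primrec.snd))
        (Primrec.nat_mul.comp ((primrec_omegaNum c).comp Primrec.snd)
          (primrec_two_pow.comp (Primrec.succ.comp hfst)))
    exact this.decide.to_comp
  obtain ⟨f, hf, hfmem⟩ := exists_reduction_haltingSet hp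
  refine turingLE_of_recIn_strVal_pre (RecIn.iterate_query
    (o := fun n => if n ∈ haltingSet then 1 else 0) (step := fun v b => 2 * v + b) hf
    ?_ rfl fun n => ?_)
  · exact (Primrec.nat_add.comp (Primrec.nat_mul.comp (Primrec.const 2) Primrec.fst)
      Primrec.snd).to_comp
  · have hmem : f (Nat.pair n (strVal (pre A n))) ∈ haltingSet ↔ A n = true := by
      rw [hfmem, hbit]
      simp
    rw [strVal_pre_succ]
    simp only [hmem]
    cases A n <;> simp

/-- Every halting program of the diagonal has halted by the length of an output of `U` on a
string whose length exceeds the index by at most a constant. -/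
theorem UniversalPFMachine.exists_halting_time_bound {U : Str →. Str} (hU : UniversalPFMachine U) :
    ∃ d, ∀ e ∈ haltingSet, ∃ ρ τ, τ ∈ U ρ ∧ ρ.length ≤ e + d ∧
      (Code.evaln τ.length (Denumerable.ofNat Code e) e).isSome := by
  set ev : ℕ → ℕ → Bool := fun e t => (Code.evaln t (Denumerable.ofNat Code e) e).isSome with hev
  have hevp : Primrec₂ ev := Primrec.option_isSome.comp (Code.primrec_evaln.comp
    (Primrec.pair (Primrec.pair Primrec.snd ((Primrec.ofNat Code).comp Primrec.fst)) Primrec.fst))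
  have hmono : ∀ e s t, s ≤ t → ev e s = true → ev e t = true := fun e s t hst h => by
    obtain ⟨x, hx⟩ := Option.isSome_iff_exists.1 h
    exact Option.isSome_iff_exists.2 ⟨x, Code.evaln_mono hst hx⟩
  set P : ℕ → Prop := fun k =>
    ev k.unpair.1 k.unpair.2 = true ∧ ev k.unpair.1 (k.unpair.2 - 1) = false with hP
  have hfst : Primrec fun k : ℕ => k.unpair.1 := Primrec.fst.comp Primrec.unpair
  have hsnd : Primrec fun k : ℕ => k.unpair.2 := Primrec.snd.comp Primrec.unpair
  have hPp : PrimrecPred P :=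
    PrimrecPred.and (Primrec.eq.comp (hevp.comp hfst hsnd) (Primrec.const true))
      (Primrec.eq.comp (hevp.comp hfst (Primrec.pred.comp hsnd)) (Primrec.const false))
  have hr : Primrec fun k : ℕ =>
      if P k then some (k.unpair.1 + 1, List.replicate k.unpair.2 false) else none :=
    Primrec.ite hPp (Primrec.option_some.comp
      (Primrec.pair (Primrec.succ.comp hfst) ((primrec_replicate false).comp hsnd)))
      (Primrec.const none)
  have huniq : ∀ e t t', P (Nat.pair e t) → P (Nat.pair e t') → t ≤ t' := fun e t t' h h' => by
    simp only [hP, Nat.unpair_pair] at h h'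
    by_contra hlt
    have := hmono e t' (t - 1) (by omega) h'.1
    rw [h.2] at this
    exact absurd this (by simp)
  obtain ⟨d, hd⟩ := hU.exists_const_of_requests hr (by
    rw [tsum_eq_tsum_pair]
    refine (ENNReal.tsum_le_tsum fun e => ?_).trans tsum_inv_two_pow_succ.le
    by_cases hex : ∃ t, P (Nat.pair e t)
    · obtain ⟨t, ht⟩ := hex
      rw [tsum_eq_single t fun t' ht' => ?_]
      · simp [ht]
      · rw [if_neg fun h => ht' ((huniq e _ _ h ht).antisymm (huniq e _ _ ht h))]
        rfl
    · simp only [not_exists] at hex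
      simp [hex])
  refine ⟨d + 1, fun e he => ?_⟩
  obtain ⟨x, hx⟩ := Part.dom_iff_mem.1 he
  obtain ⟨s, hs⟩ := Code.evaln_complete.1 hx
  have hex : ∃ t, ev e t = true := ⟨s, Option.isSome_iff_exists.2 ⟨x, hs⟩⟩
  have hPt : P (Nat.pair e (Nat.find hex)) := by
    simp only [hP, Nat.unpair_pair]
    refine ⟨Nat.find_spec hex, ?_⟩
    rcases Nat.eq_zero_or_pos (Nat.find hex) with h0 | hpos
    · have := Nat.find_spec hex
      rw [h0] at this
      simp [hev, Code.evaln] at this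
    · exact Bool.eq_false_iff.2 (Nat.find_min hex (by omega))
  obtain ⟨ρ, hρ, hlen⟩ := hd (Nat.pair e (Nat.find hex)) (e + 1)
    (List.replicate (Nat.find hex) false) (by simp [hPt])
  exact ⟨ρ, _, hρ, by omega, by simpa using Nat.find_spec hex⟩

theorem haltingSet_turingLE_of_binExp_eq_omega {μ : MeasureTheory.Measure Seq} (hμ : FairCoin μ)
    {U : Str →. Str} (hU : UniversalPFMachine U) {A : Seq} (hA : binExp A = Omega U) :
    TuringLE (oracleOfSet haltingSet) (oracleOf A) := by
  obtain ⟨c, hc⟩ := exists_isCodeOf hU.1.1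
  obtain ⟨d, hd⟩ := hU.exists_halting_time_bound
  have hadd : Computable fun e => e + d + 1 :=
    (Primrec.succ.comp (Primrec.nat_add.comp Primrec.id (Primrec.const d))).to_comp
  have hv : RecIn (oracleOf A) fun e => Part.some (strVal (pre A (e + d + 1))) :=
    RecIn.comp_some (g := fun e => e + d + 1) (recIn_strVal_pre A) (RecIn.of_computable _ hadd)
  have hpair := RecIn.pair_some (RecIn.of_computable (oracleOf A) Computable.id) hv
  set g : ℕ →. ℕ := fun p => (stageSearch c (p.unpair.1 + d + 1, p.unpair.2)).map fun s =>
    cond (Code.evaln (outBound c s) (Denumerable.ofNat Code p.unpair.1) p.unpair.1).isSome 1 0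
    with hg
  have hgp : Partrec g := by
    have hfst : Primrec fun p : ℕ => p.unpair.1 := Primrec.fst.comp Primrec.unpair
    refine Partrec.map ((partrec_stageSearch c).comp (Computable.pair
      (hadd.comp hfst.to_comp) (Primrec.snd.comp Primrec.unpair).to_comp)) ?_
    have hfst' : Primrec fun q : ℕ × ℕ => q.1.unpair.1 := hfst.comp Primrec.fst
    exact (Primrec.cond (Primrec.option_isSome.comp (Code.primrec_evaln.comp
      (Primrec.pair (Primrec.pair ((primrec_outBound c).comp Primrec.snd)
        ((Primrec.ofNat Code).comp hfst')) hfst')))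
      (Primrec.const 1) (Primrec.const 0)).to_comp
  refine (RecIn.comp_some (RecIn.of_partrec (oracleOf A) (Partrec.nat_iff.1 hgp)) hpair).of_eq
    fun e => ?_
  obtain ⟨s, hs⟩ := hc.exists_mem_stageSearch hμ hU.1.2 hA (e + d + 1)
  refine Part.eq_some_iff.2 ?_
  have hval : (if e ∈ haltingSet then 1 else 0) =
      cond (Code.evaln (outBound c s) (Denumerable.ofNat Code e) e).isSome 1 0 := by
    by_cases he : e ∈ haltingSet
    · obtain ⟨ρ, τ, hτ, hlen, hsome⟩ := hd e he
      have hmem := hc.mem_stageDom_of_lt hμ hU.1.2 hA (lt_of_mem_stageSearch hs)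
        (Part.dom_iff_mem.2 ⟨τ, hτ⟩) (Nat.lt_succ_of_le hlen)
      obtain ⟨x, hx⟩ := Option.isSome_iff_exists.1 hsome
      have := Code.evaln_mono (hc.length_le_outBound hmem hτ) hx
      simp [he, Option.mem_def.1 this]
    · rw [if_neg he]
      cases hx : Code.evaln (outBound c s) (Denumerable.ofNat Code e) e with
      | none => rfl
      | some x => exact absurd (Part.dom_iff_mem.2 ⟨x, Code.evaln_sound hx⟩) he
  rw [hval, hg]
  simp only [Nat.unpair_pair, id]
  exact Part.mem_map (fun s =>
    cond (Code.evaln (outBound c s) (Denumerable.ofNat Code e) e).isSome 1 0) hs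

end TuringReductions

section Randomness

open Encodable Nat.Partrec

theorem CEPred.exists_enumeration {α : Type*} [Primcodable α] {p : α → Prop} (hp : CEPred p) :
    ∃ w : ℕ → Option α, Primrec w ∧ (∀ a, p a ↔ ∃ s, w s = some a) ∧
      ∀ s a, w s = some a → encode a ≤ s := by
  obtain ⟨c, hc⟩ := Code.exists_code.1 (Partrec.bind_decode₂_iff.1 hp)
  have hsome : ∀ t k, (c.evaln t k).isSome → ∃ a, encode a = k ∧ p a := fun t k h => by
    obtain ⟨x, hx⟩ := Option.isSome_iff_exists.1 h
    have hx' := Code.evaln_sound (Option.mem_def.2 hx)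
    rw [hc, Part.mem_bind_iff] at hx'
    obtain ⟨a, ha, hxa⟩ := hx'
    obtain ⟨y, hy, -⟩ := (Part.mem_map_iff _).1 hxa
    exact ⟨a, mem_decode₂.1 (Part.mem_ofOption.1 ha), (Part.mem_assert_iff.1 hy).1⟩
  set w : ℕ → Option α := fun s =>
    if (c.evaln s.unpair.2 s.unpair.1).isSome then decode s.unpair.1 else none with hw
  have hwspec : ∀ s a, w s = some a → encode a ≤ s ∧ p a := fun s a h => by
    by_cases hs : (c.evaln s.unpair.2 s.unpair.1).isSome
    · obtain ⟨b, hb, hpb⟩ := hsome _ _ hs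
      rw [hw] at h
      simp only [hs, if_true] at h
      rw [← hb, encodek, Option.some_inj] at h
      subst h
      exact ⟨hb ▸ Nat.unpair_left_le s, hpb⟩
    · simp [hw, hs] at h
  refine ⟨w, ?_, fun a => ⟨fun ha => ?_, fun ⟨s, hs⟩ => (hwspec s a hs).2⟩,
    fun s a h => (hwspec s a h).1⟩
  · have hfst : Primrec fun k : ℕ => k.unpair.1 := Primrec.fst.comp Primrec.unpair
    have hsnd : Primrec fun k : ℕ => k.unpair.2 := Primrec.snd.comp Primrec.unpair
    exact Primrec.ite (Primrec.eq.comp (Primrec.option_isSome.comp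
      ((primrec_evaln_diag c).comp hsnd hfst)) (Primrec.const true))
      (Primrec.decode.comp hfst) (Primrec.const none)
  · have hmem : encode () ∈ c.eval (encode a) := by
      rw [hc, Part.mem_bind_iff]
      exact ⟨a, Part.mem_ofOption.2 (mem_decode₂.2 rfl),
        Part.mem_map _ (Part.mem_assert ha (Part.mem_some ()))⟩
    obtain ⟨t, ht⟩ := Code.evaln_complete.1 hmem
    refine ⟨Nat.pair (encode a) t, ?_⟩
    simp [hw, Option.mem_def.1 ht]

/-- At stage `j` the enumeration `w` yields a prefix of `ν` for the component with index `i`. -/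
def CoveredAt (w : ℕ → Option (ℕ × Str)) (i : ℕ) (ν : Str) (j : ℕ) : Prop :=
  ∃ σ, w j = some (i, σ) ∧ σ <+: ν

/-- The stage `|ν|` is the first one at which a prefix of `ν` is enumerated into component `i`. -/
def FirstCovered (w : ℕ → Option (ℕ × Str)) (i : ℕ) (ν : Str) : Prop :=
  CoveredAt w i ν ν.length ∧ ∀ j < ν.length, ¬ CoveredAt w i ν j

theorem primrecPred_coveredAt {w : ℕ → Option (ℕ × Str)} (hw : Primrec w) :
    PrimrecPred fun q : ℕ × ℕ × Str => CoveredAt w q.2.1 q.2.2 q.1 := by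
  have hwj : Primrec fun q : ℕ × ℕ × Str => w q.1 := hw.comp Primrec.fst
  have : PrimrecPred fun q : ℕ × ℕ × Str =>
      w q.1 = some (q.2.1, q.2.2.take ((w q.1).getD (0, [])).2.length) :=
    Primrec.eq.comp hwj (Primrec.option_some.comp (Primrec.pair (Primrec.fst.comp Primrec.snd)
      (Primrec.list_take.comp (Primrec.list_length.comp (Primrec.snd.comp
        (Primrec.option_getD.comp hwj (Primrec.const (0, []))))) (Primrec.snd.comp Primrec.snd))))
  refine this.of_eq fun ⟨j, i, ν⟩ => ⟨fun h => ⟨_, h, List.take_prefix _ _⟩, ?_⟩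
  rintro ⟨σ, hσ, hpre⟩
  simp only [hσ, Option.getD_some]
  rw [← List.prefix_iff_eq_take.1 hpre]

theorem primrecPred_firstCovered {w : ℕ → Option (ℕ × Str)} (hw : Primrec w) :
    PrimrecPred fun q : ℕ × Str => FirstCovered w q.1 q.2 := by
  have hlen : Primrec fun q : ℕ × Str => q.2.length := Primrec.list_length.comp Primrec.snd
  have hcov := primrecPred_coveredAt hw
  have hrel : PrimrecRel fun (j : ℕ) (q : ℕ × Str) => ¬ CoveredAt w q.1 q.2 j := hcov.not
  have hall : PrimrecPred fun q : ℕ × Str => ∀ j < q.2.length, ¬ CoveredAt w q.1 q.2 j :=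
    (hrel.forall_mem_list.comp (Primrec.list_range.comp hlen) Primrec.id).of_eq fun q => by simp
  exact PrimrecPred.and (hcov.comp (Primrec.pair hlen Primrec.id)) hall

theorem FirstCovered.eq_of_isPrefix {w : ℕ → Option (ℕ × Str)} {i : ℕ} {ν ν' : Str}
    (h : FirstCovered w i ν) (h' : FirstCovered w i ν') (hpre : ν <+: ν') : ν = ν' := by
  refine hpre.eq_of_length_le (not_lt.1 fun hlt => h'.2 _ hlt ?_)
  obtain ⟨σ, hσ, hσν⟩ := h.1
  exact ⟨σ, hσ, hσν.trans hpre⟩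

/-- A sequence that fails a Martin-Löf test has initial segments of arbitrarily low complexity. -/
theorem UniversalPFMachine.exists_const_of_mem_test {μ : MeasureTheory.Measure Seq}
    (hμ : FairCoin μ) {U : Str →. Str} (hU : UniversalPFMachine U) {V : ℕ → Set Seq}
    (hV : MLTest μ V) {A : Seq} (hA : A ∈ ⋂ i, V i) :
    ∃ d, ∀ i, ∃ n ρ, pre A n ∈ U ρ ∧ ρ.length + i ≤ n + d := by
  obtain ⟨W, hW, hVW, hμV⟩ := hV
  have hWodd : CEPred fun q : ℕ × Str => (2 * q.1 + 1, q.2) ∈ W :=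
    Partrec.comp hW (Primrec.to_comp (Primrec.pair (Primrec.succ.comp
      (Primrec.nat_mul.comp (Primrec.const 2) Primrec.fst)) Primrec.snd))
  obtain ⟨w, hw, hmem, hbound⟩ := hWodd.exists_enumeration
  have hle : ∀ {i ν}, FirstCovered w i ν → i ≤ ν.length := fun {i ν} h => by
    obtain ⟨σ, hσ, -⟩ := h.1
    exact (Nat.left_le_pair i (encode σ)).trans (hbound _ _ hσ)
  set P : ℕ → Prop := fun k => encode ((decode (α := Str) k.unpair.2).getD []) = k.unpair.2 ∧
    FirstCovered w k.unpair.1 ((decode (α := Str) k.unpair.2).getD []) with hP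
  have hfst : Primrec fun k : ℕ => k.unpair.1 := Primrec.fst.comp Primrec.unpair
  have hsnd : Primrec fun k : ℕ => k.unpair.2 := Primrec.snd.comp Primrec.unpair
  have hν : Primrec fun k : ℕ => (decode (α := Str) k.unpair.2).getD [] :=
    Primrec.option_getD.comp (Primrec.decode.comp hsnd) (Primrec.const [])
  have hPp : PrimrecPred P := PrimrecPred.and (Primrec.eq.comp (Primrec.encode.comp hν) hsnd)
    ((primrecPred_firstCovered hw).comp (Primrec.pair hfst hν))
  have hr : Primrec fun k : ℕ => if P k then
      some (((decode (α := Str) k.unpair.2).getD []).length - k.unpair.1,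
        (decode (α := Str) k.unpair.2).getD []) else none :=
    Primrec.ite hPp (Primrec.option_some.comp
      (Primrec.pair (Primrec.nat_sub.comp (Primrec.list_length.comp hν) hfst) hν))
      (Primrec.const none)
  obtain ⟨d, hd⟩ := hU.exists_const_of_requests hr (by
    rw [tsum_eq_tsum_pair]
    refine (ENNReal.tsum_le_tsum fun i => ?_).trans tsum_inv_two_pow_succ.le
    have hinj : Function.Injective fun ν : {ν : Str // FirstCovered w i ν} => encode ν.1 :=
      encode_injective.comp Subtype.val_injective
    rw [← hinj.tsum_eq fun m hm => ?_]
    · have hterm : ∀ ν : {ν : Str // FirstCovered w i ν},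
          (2 : ℝ≥0∞)⁻¹ ^ (ν.1.length - i) = 2 ^ i * 2⁻¹ ^ ν.1.length := fun ν => by
        conv_rhs => rw [← Nat.sub_add_cancel (hle ν.2), pow_add, mul_left_comm, ← mul_pow]
        rw [ENNReal.mul_inv_cancel two_ne_zero ENNReal.ofNat_ne_top, one_pow, mul_one]
      have hsub : ∀ ν : {ν : Str // FirstCovered w i ν}, cyl ν.1 ⊆ V (2 * i + 1) := fun ν => by
        obtain ⟨σ, hσ, hpre⟩ := ν.2.1
        rw [hVW]
        exact (cyl_subset_cyl hpre).trans
          (Set.subset_biUnion_of_mem (u := cyl) ((hmem (i, σ)).2 ⟨_, hσ⟩))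
      have hmeas := (tsum_le_measure_of_prefixFree hμ
        (fun ν : {ν : Str // FirstCovered w i ν} => ν.1)
        (fun ν ν' h => Subtype.ext (ν.2.eq_of_isPrefix ν'.2 h)) hsub).trans (hμV (2 * i + 1))
      have hweight : ∀ ν : {ν : Str // FirstCovered w i ν}, P (Nat.pair i (encode ν.1)) :=
        fun ν => by simpa [hP] using ν.2
      simp only [hweight, if_true, Nat.unpair_pair, encodek, Option.getD_some, Option.elim_some,
        hterm]
      rw [ENNReal.tsum_mul_left]
      refine (mul_le_mul_right hmeas (2 ^ i)).trans (le_of_eq ?_)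
      rw [show 2 * i + 1 = i + (i + 1) by ring, pow_add, ← mul_assoc, ← mul_pow,
        ENNReal.mul_inv_cancel two_ne_zero ENNReal.ofNat_ne_top, one_pow, one_mul]
    · by_cases hPm : P (Nat.pair i m)
      · simp only [hP, Nat.unpair_pair] at hPm
        exact ⟨⟨_, hPm.2⟩, hPm.1⟩
      · simp [hPm] at hm)
  refine ⟨d, fun i => ?_⟩
  have hex : ∃ s σ, w s = some (i, σ) ∧ A ∈ cyl σ := by
    have hAi := Set.mem_iInter.1 hA (2 * i + 1)
    rw [hVW, Set.mem_iUnion₂] at hAi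
    obtain ⟨σ, hσ, hAσ⟩ := hAi
    obtain ⟨s, hs⟩ := (hmem (i, σ)).1 hσ
    exact ⟨s, σ, hs, hAσ⟩
  set s := Nat.find hex with hs
  have hfirst : FirstCovered w i (pre A s) := by
    rw [FirstCovered, length_pre]
    constructor
    · obtain ⟨σ, hσ, hAσ⟩ := Nat.find_spec hex
      refine ⟨σ, hσ, isPrefix_pre_of_mem_cyl hAσ ?_⟩
      exact (length_le_encode σ).trans
        ((Nat.right_le_pair i (encode σ)).trans (hbound _ _ hσ))
    · rintro j hj ⟨σ, hσ, hpre⟩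
      exact Nat.find_min hex hj ⟨σ, hσ, cyl_subset_cyl hpre (mem_cyl_pre A s)⟩
  obtain ⟨ρ, hρ, hlen⟩ := hd (Nat.pair i (encode (pre A s))) (s - i) (pre A s) (by
    have : P (Nat.pair i (encode (pre A s))) := by simpa [hP] using hfirst
    simp [this])
  have := hle hfirst
  rw [length_pre] at this
  exact ⟨s, ρ, hρ, by omega⟩

/-- The initial segments of the halting probability are incompressible up to a constant. -/
theorem UniversalPFMachine.exists_const_le_length {μ : MeasureTheory.Measure Seq} (hμ : FairCoin μ)
    {U : Str →. Str} (hU : UniversalPFMachine U) {A : Seq} (hA : binExp A = Omega U) :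
    ∃ d, ∀ n ρ, pre A n ∈ U ρ → n ≤ ρ.length + d := by
  obtain ⟨c, hc⟩ := exists_isCodeOf hU.1.1
  set M : Str →. Str := fun ρ => (U ρ).bind fun σ =>
    (stageSearch c (σ.length, strVal σ)).map fun s => List.replicate (outBound c s + 1) false
    with hM
  have hMpart : Partrec M := by
    refine Partrec.bind hU.1.1 (Partrec.map ((partrec_stageSearch c).comp
      (Primrec.pair (Primrec.list_length.comp Primrec.snd)
        (primrec_strVal.comp Primrec.snd)).to_comp) ?_)
    exact ((primrec_replicate false).comp
      (Primrec.succ.comp ((primrec_outBound c).comp Primrec.snd))).to_comp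
  have hMdom : ∀ σ, (M σ).Dom → (U σ).Dom := fun σ h => h.1
  obtain ⟨d, hd⟩ := hU.exists_const (M := M) ⟨hMpart, fun σ hσ τ hτ h =>
    hU.1.2 σ (hMdom σ hσ) τ (hMdom τ hτ) h⟩
  refine ⟨d, fun n ρ hρ => ?_⟩
  obtain ⟨s, hs⟩ := hc.exists_mem_stageSearch hμ hU.1.2 hA n
  have hout : List.replicate (outBound c s + 1) false ∈ M ρ := by
    refine Part.mem_bind hρ ?_
    rw [length_pre]
    exact Part.mem_map (fun s => List.replicate (outBound c s + 1) false) hs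
  obtain ⟨ρ', hρ', hlen⟩ := hd ρ _ hout
  by_contra hlt
  have hstage := hc.mem_stageDom_of_lt hμ hU.1.2 hA (lt_of_mem_stageSearch hs)
    (Part.dom_iff_mem.2 ⟨_, hρ'⟩) (by omega : ρ'.length < n)
  have := hc.length_le_outBound hstage hρ'
  rw [List.length_replicate] at this
  omega

theorem mlRandom_of_binExp_eq_omega {μ : MeasureTheory.Measure Seq} (hμ : FairCoin μ)
    {U : Str →. Str} (hU : UniversalPFMachine U) {A : Seq} (hA : binExp A = Omega U) :
    MLRandom μ A := by
  intro V hV hAV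
  obtain ⟨d, hd⟩ := hU.exists_const_of_mem_test hμ hV hAV
  obtain ⟨e, he⟩ := hU.exists_const_le_length hμ hA
  obtain ⟨n, ρ, hρ, hlen⟩ := hd (d + e + 1)
  have := he n ρ hρ
  omega

end Randomness

/-- **Chaitin's theorem on `Ω`**: for a universal prefix-free machine `U`, the halting
probability `Ω_U` is left-c.e., its binary expansion is Martin-Löf random, and it is
Turing equivalent to the halting problem `∅'`. -/
theorem chaitin_omega (μ : MeasureTheory.Measure Seq) (hμ : FairCoin μ)
    (U : Str →. Str) (hU : UniversalPFMachine U) :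
    LeftCE (Omega U) ∧
      (∀ A : Seq, binExp A = Omega U → MLRandom μ A) ∧
      (∀ A : Seq, binExp A = Omega U →
        TuringLE (oracleOf A) (oracleOfSet haltingSet) ∧
          TuringLE (oracleOfSet haltingSet) (oracleOf A)) := by
  exact ⟨leftCE_omega hμ hU, fun A hA => mlRandom_of_binExp_eq_omega hμ hU hA, fun A hA =>
    ⟨turingLE_haltingSet_of_binExp_eq_omega hμ hU hA,
      haltingSet_turingLE_of_binExp_eq_omega hμ hU hA⟩⟩

end AR
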